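/- Suppose f satisfies the (2r,4r)-restricted strong convexity and smoothness properties with parameter δ ∈ [0,1). Fix Y* ∈ ℝ^{p×r}_*, set X* := Y*Y*ᵀ, κ* := σ_1(Y*)/σ_r(Y*) and N := sup{⟨B, ∇f(X*)⟩ : rank(B) ≤ r, ‖B‖_F ≤ 1}, and let μ, α ≥ 0 and β, γ > 0. If Y ∈ ℝ^{p×r}_* satisfies ‖2(YYᵀ − X*)Y‖_F > α·μ·σ_r(Y*)³/(4κ*), ‖Y‖ ≤ β‖Y*‖ and ‖YYᵀ‖_F ≤ γ‖X*‖_F, then ‖2∇f(YYᵀ)Y‖_F ≥ α·μ·σ_r(Y*)³/(4κ*) − (2δβ(1+γ)‖Y*‖·‖X*‖_F + 2β‖Y*‖·N). In particular, if moreover δ ≤ (αμ/(32κ*²β(1+γ)))·σ_r(Y*)²/‖X*‖_F and N ≤ (αμ/(32κ*²β))·σ_r(Y*)², then ‖2∇f(YYᵀ)Y‖_F > α·μ·σ_r(Y*)³/(8κ*). -/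

import Mathlib

open Matrix

/-- Trace inner product `⟨A,B⟩ = tr(AᵀB)`. -/
noncomputable def trInner {m n : ℕ} (A B : Matrix (Fin m) (Fin n) ℝ) : ℝ :=
  ∑ i, ∑ j, A i j * B i j

/-- Frobenius norm. -/
noncomputable def frob {m n : ℕ} (A : Matrix (Fin m) (Fin n) ℝ) : ℝ :=
  Real.sqrt (∑ i, ∑ j, (A i j) ^ 2)

open scoped Classical in
/-- The `i`-th largest eigenvalue (1-indexed, `1 ≤ i ≤ n`) of a Hermitian matrix; junk value 0
otherwise. -/
noncomputable def eigVal {n : ℕ} (A : Matrix (Fin n) (Fin n) ℝ) (i : ℕ) : ℝ :=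
  if hA : A.IsHermitian then
    if h : n - i < n then hA.eigenvalues (Tuple.sort hA.eigenvalues ⟨n - i, h⟩) else 0
  else 0

/-- The `i`-th largest singular value (1-indexed) of `Y`, so `sval Y 1 = ‖Y‖` (spectral norm)
and `sval Y r` is the least singular value. -/
noncomputable def sval {p r : ℕ} (Y : Matrix (Fin p) (Fin r) ℝ) (i : ℕ) : ℝ :=
  Real.sqrt (eigVal (Yᵀ * Y) i)

/-- `Q` is an orthogonal matrix. -/
def IsOrtho {r : ℕ} (Q : Matrix (Fin r) (Fin r) ℝ) : Prop := Qᵀ * Q = 1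

/-- The quotient distance `d(Y₁,Y₂) = min_{Q ∈ O(r)} ‖Y₂Q − Y₁‖_F`. -/
noncomputable def dOrth {p r : ℕ} (Y₁ Y₂ : Matrix (Fin p) (Fin r) ℝ) : ℝ :=
  sInf {c | ∃ Q : Matrix (Fin r) (Fin r) ℝ, IsOrtho Q ∧ c = frob (Y₂ * Q - Y₁)}


lemma trInner_eq_trace {m n : ℕ} (A B : Matrix (Fin m) (Fin n) ℝ) :
    trInner A B = (Aᵀ * B).trace := by
  simp only [trInner, Matrix.trace, Matrix.diag, Matrix.mul_apply, Matrix.transpose_apply]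
  exact Finset.sum_comm

lemma trInner_comm {m n : ℕ} (A B : Matrix (Fin m) (Fin n) ℝ) :
    trInner A B = trInner B A := by
  simp only [trInner, mul_comm]

lemma trInner_add_right {m n : ℕ} (A B C : Matrix (Fin m) (Fin n) ℝ) :
    trInner A (B + C) = trInner A B + trInner A C := by
  simp [trInner_eq_trace, Matrix.mul_add]

lemma trInner_sub_right {m n : ℕ} (A B C : Matrix (Fin m) (Fin n) ℝ) :
    trInner A (B - C) = trInner A B - trInner A C := by
  simp [trInner_eq_trace, Matrix.mul_sub]

lemma trInner_smul_right {m n : ℕ} (A B : Matrix (Fin m) (Fin n) ℝ) (c : ℝ) :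
    trInner A (c • B) = c * trInner A B := by
  simp [trInner_eq_trace]

lemma trInner_add_left {m n : ℕ} (A B C : Matrix (Fin m) (Fin n) ℝ) :
    trInner (A + B) C = trInner A C + trInner B C := by
  simp [trInner_eq_trace, Matrix.add_mul]

lemma trInner_sub_left {m n : ℕ} (A B C : Matrix (Fin m) (Fin n) ℝ) :
    trInner (A - B) C = trInner A C - trInner B C := by
  simp [trInner_eq_trace, Matrix.sub_mul]

lemma trInner_smul_left {m n : ℕ} (A B : Matrix (Fin m) (Fin n) ℝ) (c : ℝ) :
    trInner (c • A) B = c * trInner A B := by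
  simp [trInner_eq_trace]

lemma trInner_mul_adj {m n k : ℕ} (A : Matrix (Fin m) (Fin n) ℝ) (Y : Matrix (Fin n) (Fin k) ℝ)
    (W : Matrix (Fin m) (Fin k) ℝ) : trInner (A * Y) W = trInner A (W * Yᵀ) := by
  rw [trInner_eq_trace, trInner_eq_trace, Matrix.transpose_mul, Matrix.mul_assoc,
    Matrix.trace_mul_comm, Matrix.mul_assoc]

lemma frob_nonneg {m n : ℕ} (A : Matrix (Fin m) (Fin n) ℝ) : 0 ≤ frob A := Real.sqrt_nonneg _

lemma frob_sq {m n : ℕ} (A : Matrix (Fin m) (Fin n) ℝ) : frob A ^ 2 = trInner A A := by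
  unfold frob trInner
  have h : 0 ≤ ∑ i, ∑ j, (A i j) ^ 2 :=
    Finset.sum_nonneg fun i _ => Finset.sum_nonneg fun j _ => sq_nonneg _
  rw [Real.sq_sqrt h]
  simp only [sq]

lemma trInner_le {m n : ℕ} (A B : Matrix (Fin m) (Fin n) ℝ) :
    trInner A B ≤ frob A * frob B := by
  unfold frob trInner
  rw [← Finset.sum_product', ← Finset.sum_product', ← Finset.sum_product']
  exact Real.sum_mul_le_sqrt_mul_sqrt _ _ _

lemma frob_smul {m n : ℕ} (A : Matrix (Fin m) (Fin n) ℝ) (c : ℝ) (hc : 0 ≤ c) :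
    frob (c • A) = c * frob A := by
  rw [← sq_eq_sq₀ (frob_nonneg _) (mul_nonneg hc (frob_nonneg _)), mul_pow, frob_sq, frob_sq,
    trInner_smul_left, trInner_smul_right]
  ring

lemma frob_sub_le {m n : ℕ} (A B : Matrix (Fin m) (Fin n) ℝ) :
    frob (A - B) ≤ frob A + frob B := by
  refine (sq_le_sq₀ (frob_nonneg _) (add_nonneg (frob_nonneg _) (frob_nonneg _))).1 ?_
  have h := trInner_le ((-1 : ℝ) • A) B
  have h1 : frob ((-1 : ℝ) • A) = frob A := by simp [frob]
  rw [h1, trInner_smul_left] at h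
  have e : frob (A - B) ^ 2 = frob A ^ 2 + frob B ^ 2 - 2 * trInner A B := by
    rw [frob_sq, frob_sq, frob_sq, trInner_sub_left, trInner_sub_right, trInner_sub_right,
      trInner_comm B A]
    ring
  nlinarith

lemma frob_zero_imp {m n : ℕ} (A : Matrix (Fin m) (Fin n) ℝ) (B : Matrix (Fin m) (Fin n) ℝ)
    (h : frob A = 0) : trInner A B = 0 := by
  have h1 := trInner_le A B
  have h2 := trInner_le A ((-1 : ℝ) • B)
  rw [trInner_smul_right] at h2
  rw [h] at h1 h2
  linarith

lemma taylor_upper (h g k : ℝ → ℝ) (c : ℝ) (hh : ∀ t, HasDerivAt h (g t) t)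
    (hg : ∀ t, HasDerivAt g (k t) t) (hk : ∀ t, k t ≤ c) :
    h 1 - h 0 - g 0 ≤ c / 2 := by
  have ha : Antitone (fun t => g t - c * t) := by
    have hd : ∀ t, HasDerivAt (fun t => g t - c * t) (k t - c * 1) t := fun t =>
      (hg t).sub ((hasDerivAt_id t).const_mul c)
    apply antitone_of_deriv_nonpos (fun t => (hd t).differentiableAt)
    intro t
    rw [(hd t).deriv]
    linarith [hk t]
  have hd : ∀ t, HasDerivAt (fun t => h t - g 0 * t - c / 2 * t ^ 2)
      (g t - g 0 * 1 - c / 2 * ((2 : ℕ) * t ^ (2 - 1) * 1)) t := fun t =>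
    ((hh t).sub ((hasDerivAt_id t).const_mul (g 0))).sub
      (((hasDerivAt_id t).pow 2).const_mul (c / 2))
  have hb : AntitoneOn (fun t => h t - g 0 * t - c / 2 * t ^ 2) (Set.Ici 0) := by
    apply antitoneOn_of_deriv_nonpos (convex_Ici 0)
      (fun t _ => (hd t).continuousAt.continuousWithinAt)
      (fun t _ => (hd t).differentiableAt.differentiableWithinAt)
    intro t ht
    rw [interior_Ici] at ht
    rw [(hd t).deriv]
    have := ha (le_of_lt ht : (0 : ℝ) ≤ t)
    simp at this ⊢
    linarith
  have := hb (Set.mem_Ici.2 le_rfl) (Set.mem_Ici.2 zero_le_one) (zero_le_one)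
  simp at this
  linarith

lemma mulVec_le_eig {n : ℕ} (A : Matrix (Fin n) (Fin n) ℝ) (hA : A.IsHermitian) (hn : 0 < n)
    (w : Fin n → ℝ) : w ⬝ᵥ (A *ᵥ w) ≤ eigVal A 1 * (w ⬝ᵥ w) := by
  have hlt : n - 1 < n := by omega
  have hmax : ∀ i, hA.eigenvalues i ≤ eigVal A 1 := by
    intro i
    unfold eigVal
    rw [dif_pos hA, dif_pos hlt]
    have hm := Tuple.monotone_sort hA.eigenvalues
    have := @hm ((Tuple.sort hA.eigenvalues).symm i) ⟨n - 1, hlt⟩ (by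
      rw [Fin.le_def]; have := ((Tuple.sort hA.eigenvalues).symm i).2; simp only; omega)
    simpa using this
  set l := eigVal A 1
  have hps : (l • (1 : Matrix (Fin n) (Fin n) ℝ) - A).PosSemidef := by
    have h1 := hA.spectral_theorem
    set U := hA.eigenvectorUnitary
    have hU : (U : Matrix (Fin n) (Fin n) ℝ) * (U : Matrix (Fin n) (Fin n) ℝ)ᴴ = 1 := by
      have := (Matrix.mem_unitaryGroup_iff (A := (U : Matrix (Fin n) (Fin n) ℝ))).1 U.2
      simpa [Matrix.star_eq_conjTranspose] using this
    have : l • (1 : Matrix (Fin n) (Fin n) ℝ) - A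
        = (U : Matrix (Fin n) (Fin n) ℝ) * diagonal (fun i => l - hA.eigenvalues i) *
          (U : Matrix (Fin n) (Fin n) ℝ)ᴴ := by
      have hd : diagonal (fun i => l - hA.eigenvalues i)
          = l • (1 : Matrix (Fin n) (Fin n) ℝ) - diagonal (hA.eigenvalues) := by
        ext i j
        by_cases h : i = j <;> simp [h, Matrix.one_apply]
      rw [hd, Matrix.mul_sub, Matrix.sub_mul]
      simp only [Matrix.mul_smul, Matrix.smul_mul, Matrix.mul_one, hU]
      congr 1
    rw [this]
    apply Matrix.PosSemidef.mul_mul_conjTranspose_same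
    exact Matrix.PosSemidef.diagonal (fun i => sub_nonneg.2 (hmax i))
  have := hps.dotProduct_mulVec_nonneg w
  simp [Matrix.sub_mulVec, Matrix.smul_mulVec, dotProduct_sub] at this
  linarith

lemma frob_mul_transpose_le {p r : ℕ} (hr : 0 < r) (W Y : Matrix (Fin p) (Fin r) ℝ) :
    frob (W * Yᵀ) ≤ frob W * sval Y 1 := by
  have hA : (Yᵀ * Y).IsHermitian := by
    simpa using Matrix.isHermitian_conjTranspose_mul_self Y
  have key : frob (W * Yᵀ) ^ 2 ≤ eigVal (Yᵀ * Y) 1 * frob W ^ 2 := by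
    have e1 : frob (W * Yᵀ) ^ 2 = ∑ i, (W i) ⬝ᵥ ((Yᵀ * Y) *ᵥ (W i)) := by
      rw [frob_sq, ← trInner_mul_adj, Matrix.mul_assoc, trInner_comm]
      unfold trInner
      refine Finset.sum_congr rfl fun i _ => ?_
      unfold dotProduct
      refine Finset.sum_congr rfl fun j _ => ?_
      congr 1
      rw [Matrix.mul_apply, Matrix.mulVec]
      unfold dotProduct
      refine Finset.sum_congr rfl fun k _ => ?_
      have : (Yᵀ * Y) k j = (Yᵀ * Y) j k := by
        have := hA.apply j k
        simpa using this
      rw [this, mul_comm]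
    have e2 : frob W ^ 2 = ∑ i, (W i) ⬝ᵥ (W i) := by
      rw [frob_sq]; rfl
    rw [e1, e2, Finset.mul_sum]
    exact Finset.sum_le_sum fun i _ => mulVec_le_eig _ hA hr _
  unfold sval
  rcases le_or_gt 0 (eigVal (Yᵀ * Y) 1) with h | h
  · refine (sq_le_sq₀ (frob_nonneg _) (mul_nonneg (frob_nonneg _) (Real.sqrt_nonneg _))).1 ?_
    rw [mul_pow, Real.sq_sqrt h]
    linarith
  · have : frob (W * Yᵀ) ^ 2 ≤ 0 := key.trans (mul_nonpos_of_nonpos_of_nonneg h.le (sq_nonneg _))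
    have h0 : frob (W * Yᵀ) = 0 := by
      have := le_antisymm this (sq_nonneg _)
      simpa using this
    rw [h0]
    exact mul_nonneg (frob_nonneg _) (Real.sqrt_nonneg _)

lemma rank_plane {p r : ℕ} (Ys V Y : Matrix (Fin p) (Fin r) ℝ) (u : ℝ) :
    (u • (Ys * Ysᵀ) + V * Yᵀ).rank ≤ 2 * r := by
  have h1 : (u • (Ys * Ysᵀ)).rank ≤ r := by
    rw [← Matrix.smul_mul]
    exact (Matrix.rank_mul_le_left _ _).trans ((Matrix.rank_le_width _))
  have h2 : (V * Yᵀ).rank ≤ r :=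
    (Matrix.rank_mul_le_left _ _).trans ((Matrix.rank_le_width _))
  have h3 : (u • (Ys * Ysᵀ) + V * Yᵀ).rank ≤ (u • (Ys * Ysᵀ)).rank + (V * Yᵀ).rank := by
    have hle : LinearMap.range (u • (Ys * Ysᵀ) + V * Yᵀ).mulVecLin
        ≤ LinearMap.range (u • (Ys * Ysᵀ)).mulVecLin ⊔ LinearMap.range (V * Yᵀ).mulVecLin := by
      rintro _ ⟨x, rfl⟩
      rw [Matrix.mulVecLin_add, LinearMap.add_apply]
      exact Submodule.add_mem_sup ⟨x, rfl⟩ ⟨x, rfl⟩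
    exact (Submodule.finrank_mono hle).trans (Submodule.finrank_add_le_finrank_add_finrank _ _)
  omega

lemma line_taylor {p r : ℕ}
    (f : Matrix (Fin p) (Fin p) ℝ → ℝ)
    (gradf : Matrix (Fin p) (Fin p) ℝ → Matrix (Fin p) (Fin p) ℝ)
    (hessf : Matrix (Fin p) (Fin p) ℝ → Matrix (Fin p) (Fin p) ℝ → ℝ)
    (hgradf : ∀ X D : Matrix (Fin p) (Fin p) ℝ,
      HasDerivAt (fun t : ℝ => f (X + t • D)) (trInner (gradf X) D) 0)
    (hhessf : ∀ X G : Matrix (Fin p) (Fin p) ℝ,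
      HasDerivAt (fun t : ℝ => trInner (gradf (X + t • G)) G) (hessf X G) 0)
    (δ : ℝ)
    (hRSCS : ∀ X G : Matrix (Fin p) (Fin p) ℝ, X.rank ≤ 2 * r → G.rank ≤ 4 * r →
      (1 - δ) * (frob G) ^ 2 ≤ hessf X G ∧ hessf X G ≤ (1 + δ) * (frob G) ^ 2)
    (A D : Matrix (Fin p) (Fin p) ℝ) (hA : ∀ t : ℝ, (A + t • D).rank ≤ 2 * r)
    (hD : D.rank ≤ 2 * r) :
    f (A + D) - f A - trInner (gradf A) D ≤ (1 + δ) / 2 * frob D ^ 2 ∧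
    (1 - δ) / 2 * frob D ^ 2 ≤ f (A + D) - f A - trInner (gradf A) D := by
  have sh : ∀ (F : Matrix (Fin p) (Fin p) ℝ → ℝ) (F' : Matrix (Fin p) (Fin p) ℝ → ℝ),
      (∀ X, HasDerivAt (fun t : ℝ => F (X + t • D)) (F' X) 0) →
      ∀ s : ℝ, HasDerivAt (fun t : ℝ => F (A + t • D)) (F' (A + s • D)) s := by
    intro F F' hF s
    have h1 := hF (A + s • D)
    have h2 : HasDerivAt (fun t : ℝ => t - s) 1 s := (hasDerivAt_id s).sub_const s
    have h1' : HasDerivAt (fun t : ℝ => F (A + s • D + t • D)) (F' (A + s • D))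
        (s - s) := by simpa using h1
    have h3 := HasDerivAt.comp (h := fun t : ℝ => t - s) s h1' h2
    simp only [mul_one] at h3
    have he : (fun t : ℝ => F (A + t • D))
        = ((fun t : ℝ => F (A + s • D + t • D)) ∘ fun t : ℝ => t - s) := by
      funext t
      simp only [Function.comp]
      congr 1
      module
    rw [he]
    exact h3
  have d1 := sh f (fun X => trInner (gradf X) D) (fun X => hgradf X D)
  have d2 := sh (fun X => trInner (gradf X) D) (fun X => hessf X D) (fun X => hhessf X D)
  have u := taylor_upper _ _ _ ((1 + δ) * frob D ^ 2) d1 d2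
    (fun t => (hRSCS _ D (hA t) (by omega)).2)
  have l := taylor_upper _ _ _ (-((1 - δ) * frob D ^ 2)) (fun t => (d1 t).neg) (fun t => (d2 t).neg)
    (fun t => neg_le_neg (hRSCS _ D (hA t) (by omega)).1)
  simp at u l
  constructor <;> linarith

lemma grad_diff {p r : ℕ}
    (f : Matrix (Fin p) (Fin p) ℝ → ℝ)
    (gradf : Matrix (Fin p) (Fin p) ℝ → Matrix (Fin p) (Fin p) ℝ)
    (hessf : Matrix (Fin p) (Fin p) ℝ → Matrix (Fin p) (Fin p) ℝ → ℝ)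
    (hgradf : ∀ X D : Matrix (Fin p) (Fin p) ℝ,
      HasDerivAt (fun t : ℝ => f (X + t • D)) (trInner (gradf X) D) 0)
    (hhessf : ∀ X G : Matrix (Fin p) (Fin p) ℝ,
      HasDerivAt (fun t : ℝ => trInner (gradf (X + t • G)) G) (hessf X G) 0)
    (δ : ℝ) (hδ0 : 0 ≤ δ)
    (hRSCS : ∀ X G : Matrix (Fin p) (Fin p) ℝ, X.rank ≤ 2 * r → G.rank ≤ 4 * r →
      (1 - δ) * (frob G) ^ 2 ≤ hessf X G ∧ hessf X G ≤ (1 + δ) * (frob G) ^ 2)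
    (Ys Y W : Matrix (Fin p) (Fin r) ℝ) :
    |trInner (gradf (Y * Yᵀ)) (W * Yᵀ) - trInner (gradf (Ys * Ysᵀ)) (W * Yᵀ)
      - trInner (Y * Yᵀ - Ys * Ysᵀ) (W * Yᵀ)|
      ≤ δ * frob (Y * Yᵀ - Ys * Ysᵀ) * frob (W * Yᵀ) := by
  -- Taylor bounds on the plane
  have T : ∀ (u v : ℝ) (U V : Matrix (Fin p) (Fin r) ℝ) (A D : Matrix (Fin p) (Fin p) ℝ),
      A = u • (Ys * Ysᵀ) + U * Yᵀ → D = v • (Ys * Ysᵀ) + V * Yᵀ →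
      f (A + D) - f A - trInner (gradf A) D ≤ (1 + δ) / 2 * frob D ^ 2 ∧
      (1 - δ) / 2 * frob D ^ 2 ≤ f (A + D) - f A - trInner (gradf A) D := by
    intro u v U V A D hA hD
    apply line_taylor f gradf hessf hgradf hhessf δ hRSCS A D
    · intro t
      have : A + t • D = (u + t * v) • (Ys * Ysᵀ) + (U + t • V) * Yᵀ := by
        rw [hA, hD, Matrix.add_mul, Matrix.smul_mul, add_smul, smul_add, smul_smul]
        abel
      rw [this]
      exact rank_plane _ _ _ _
    · rw [hD]; exact rank_plane _ _ _ _
  set a := Ys * Ysᵀ with ha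
  set b := Y * Yᵀ with hb
  set Z := W * Yᵀ with hZ
  set d := b - a with hd
  have key : ∀ s : ℝ, s * (trInner (gradf b) Z - trInner (gradf a) Z - trInner d Z)
      ≤ δ * (frob d ^ 2 / 4 + s ^ 2 * frob Z ^ 2) := by
    intro s
    have t1 := (T 1 (-1/2) 0 ((1/2 : ℝ) • Y + s • W) a ((1/2 : ℝ) • d + s • Z)
      (by simp) (by rw [Matrix.add_mul, Matrix.smul_mul, Matrix.smul_mul, hd]; module)).1
    have t2 := (T 0 (-1/2+1) Y (-(1/2 : ℝ) • Y + s • W) b (-(1/2 : ℝ) • d + s • Z)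
      (by simp [hb]) (by rw [Matrix.add_mul, Matrix.smul_mul, Matrix.smul_mul, hd]; module)).2
    have t3 := (T 1 (-1/2) 0 ((1/2 : ℝ) • Y - s • W) a ((1/2 : ℝ) • d - s • Z)
      (by simp) (by rw [Matrix.sub_mul, Matrix.smul_mul, Matrix.smul_mul, hd]; module)).2
    have t4 := (T 0 (-1/2+1) Y (-(1/2 : ℝ) • Y - s • W) b (-(1/2 : ℝ) • d - s • Z)
      (by simp [hb]) (by rw [Matrix.sub_mul, Matrix.smul_mul, Matrix.smul_mul, hd]; module)).1
    have e1 : b + (-(1/2 : ℝ) • d + s • Z) = a + ((1/2 : ℝ) • d + s • Z) := by rw [hd]; module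
    have e2 : b + (-(1/2 : ℝ) • d - s • Z) = a + ((1/2 : ℝ) • d - s • Z) := by rw [hd]; module
    rw [e1] at t2
    rw [e2] at t4
    simp only [frob_sq, trInner_add_left, trInner_add_right, trInner_sub_left, trInner_sub_right,
      trInner_smul_left, trInner_smul_right, trInner_comm Z d] at t1 t2 t3 t4 ⊢
    nlinarith
  have hq := discrim_le_zero (a := δ * frob Z ^ 2)
    (b := -(trInner (gradf b) Z - trInner (gradf a) Z - trInner d Z)) (c := δ * (frob d ^ 2 / 4))
    (fun s => by nlinarith [key s])
  apply abs_le_of_sq_le_sq _ (mul_nonneg (mul_nonneg hδ0 (frob_nonneg _)) (frob_nonneg _))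
  unfold discrim at hq
  nlinarith


/-- large gradient of `h` in the first large-gradient region: lower bound on
the lifted Riemannian gradient of `h([Y]) = f(YYᵀ)`, and a strict lower bound under the stated
conditions on `δ` and `N`. -/
theorem stmt15 {p r : ℕ}
    (f : Matrix (Fin p) (Fin p) ℝ → ℝ)
    (gradf : Matrix (Fin p) (Fin p) ℝ → Matrix (Fin p) (Fin p) ℝ)
    (hessf : Matrix (Fin p) (Fin p) ℝ → Matrix (Fin p) (Fin p) ℝ → ℝ)
    (hgradf : ∀ X D : Matrix (Fin p) (Fin p) ℝ,
      HasDerivAt (fun t : ℝ => f (X + t • D)) (trInner (gradf X) D) 0)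
    (hhessf : ∀ X G : Matrix (Fin p) (Fin p) ℝ,
      HasDerivAt (fun t : ℝ => trInner (gradf (X + t • G)) G) (hessf X G) 0)
    (δ : ℝ) (hδ0 : 0 ≤ δ) (hδ1 : δ < 1)
    (hRSCS : ∀ X G : Matrix (Fin p) (Fin p) ℝ, X.rank ≤ 2 * r → G.rank ≤ 4 * r →
      (1 - δ) * (frob G) ^ 2 ≤ hessf X G ∧ hessf X G ≤ (1 + δ) * (frob G) ^ 2)
    (Ystar : Matrix (Fin p) (Fin r) ℝ) (hYs : Ystar.rank = r)
    (X : Matrix (Fin p) (Fin p) ℝ) (hX : X = Ystar * Ystarᵀ)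
    (N : ℝ) (hN : N = sSup {c : ℝ | ∃ B : Matrix (Fin p) (Fin p) ℝ,
      B.rank ≤ r ∧ frob B ≤ 1 ∧ c = trInner B (gradf X)})
    (κ : ℝ) (hκ : κ = sval Ystar 1 / sval Ystar r)
    (μ α β γ : ℝ) (hμ0 : 0 ≤ μ) (hα0 : 0 ≤ α) (hβ0 : 0 < β) (hγ0 : 0 < γ)
    (Y : Matrix (Fin p) (Fin r) ℝ) (hY : Y.rank = r)
    (hgradH : frob ((2 : ℝ) • ((Y * Yᵀ - X) * Y)) > α * μ * (sval Ystar r) ^ 3 / (4 * κ))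
    (hspec : sval Y 1 ≤ β * sval Ystar 1)
    (hfrobYY : frob (Y * Yᵀ) ≤ γ * frob X) :
    frob ((2 : ℝ) • (gradf (Y * Yᵀ) * Y)) ≥
      α * μ * (sval Ystar r) ^ 3 / (4 * κ) -
        (2 * δ * β * (1 + γ) * sval Ystar 1 * frob X + 2 * β * sval Ystar 1 * N) ∧
    (δ ≤ α * μ / (32 * κ ^ 2 * β * (1 + γ)) * ((sval Ystar r) ^ 2 / frob X) →
      N ≤ α * μ / (32 * κ ^ 2 * β) * (sval Ystar r) ^ 2 →
      frob ((2 : ℝ) • (gradf (Y * Yᵀ) * Y)) > α * μ * (sval Ystar r) ^ 3 / (8 * κ)) := by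
  have hr : 0 < r := by
    rcases Nat.eq_zero_or_pos r with h | h
    · subst h
      exfalso
      have h1 : frob ((2 : ℝ) • ((Y * Yᵀ - X) * Y)) = 0 := by simp [frob]
      have h2 : sval Ystar 0 = 0 := by simp [sval, eigVal]
      rw [h1, h2] at hgradH
      norm_num at hgradH
    · exact h
  have hs1 : 0 ≤ sval Ystar 1 := Real.sqrt_nonneg _
  have hsr : 0 ≤ sval Ystar r := Real.sqrt_nonneg _
  have hκ0 : 0 ≤ κ := by rw [hκ]; exact div_nonneg hs1 hsr
  -- the supremum
  have hbdd : BddAbove {c : ℝ | ∃ B : Matrix (Fin p) (Fin p) ℝ,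
      B.rank ≤ r ∧ frob B ≤ 1 ∧ c = trInner B (gradf X)} := by
    refine ⟨frob (gradf X), ?_⟩
    rintro c ⟨B, _, hB, rfl⟩
    have := trInner_le B (gradf X)
    nlinarith [frob_nonneg (gradf X)]
  have hNB : ∀ B : Matrix (Fin p) (Fin p) ℝ, B.rank ≤ r →
      trInner B (gradf X) ≤ N * frob B := by
    intro B hB
    rcases (frob_nonneg B).eq_or_lt with h | h
    · rw [frob_zero_imp B _ h.symm, ← h, mul_zero]
    · have : trInner ((frob B)⁻¹ • B) (gradf X) ≤ N := by
        rw [hN]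
        refine le_csSup hbdd ⟨_, ?_, ?_, rfl⟩
        · exact (Matrix.rank_smul_of_mem_nonZeroDivisors B (mem_nonZeroDivisors_of_ne_zero
            (inv_ne_zero h.ne'))).le.trans hB
        · rw [frob_smul _ _ (inv_nonneg.2 h.le), inv_mul_cancel₀ h.ne']
      rw [trInner_smul_left, inv_mul_le_iff₀ h] at this
      linarith
  have hN0 : 0 ≤ N := by
    rw [hN]
    exact le_csSup hbdd ⟨0, by simp, by simp [frob], by simp [trInner]⟩
  -- main strict bound
  have main : frob ((2 : ℝ) • (gradf (Y * Yᵀ) * Y)) >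
      α * μ * (sval Ystar r) ^ 3 / (4 * κ) -
        (2 * δ * β * (1 + γ) * sval Ystar 1 * frob X + 2 * β * sval Ystar 1 * N) := by
    set g := frob ((2 : ℝ) • ((Y * Yᵀ - X) * Y)) with hg
    have hgpos : 0 < g := lt_of_le_of_lt (by positivity) hgradH
    set W : Matrix (Fin p) (Fin r) ℝ := (2 : ℝ) • ((Y * Yᵀ - X) * Y) with hW
    have h1 := grad_diff f gradf hessf hgradf hhessf δ hδ0 hRSCS Ystar Y W
    rw [← hX] at h1
    have h1' := (abs_le.1 h1).1
    have h2 : 2 * trInner (gradf (Y * Yᵀ)) (W * Yᵀ)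
        ≤ frob ((2 : ℝ) • (gradf (Y * Yᵀ) * Y)) * g := by
      rw [← trInner_mul_adj, ← trInner_smul_left]
      exact trInner_le _ _
    have h3 : 2 * trInner (Y * Yᵀ - X) (W * Yᵀ) = g ^ 2 := by
      rw [← trInner_mul_adj, ← trInner_smul_left, ← hW, hg, frob_sq]
    have h4 := hNB (((-1 : ℝ) • W) * Yᵀ)
      ((Matrix.rank_mul_le_left _ _).trans ((Matrix.rank_le_width _)))
    rw [Matrix.smul_mul] at h4
    have hfn : frob ((-1 : ℝ) • (W * Yᵀ)) = frob (W * Yᵀ) := by simp [frob]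
    rw [hfn, trInner_smul_left, trInner_comm] at h4
    have h5 : frob (W * Yᵀ) ≤ g * (β * sval Ystar 1) :=
      (frob_mul_transpose_le hr W Y).trans (mul_le_mul_of_nonneg_left hspec hgpos.le)
    have h6 : frob (Y * Yᵀ - X) ≤ (1 + γ) * frob X := by
      linarith [frob_sub_le (Y * Yᵀ) X]
    have h7 : δ * frob (Y * Yᵀ - X) * frob (W * Yᵀ)
        ≤ δ * ((1 + γ) * frob X) * (g * (β * sval Ystar 1)) := by
      apply mul_le_mul (mul_le_mul_of_nonneg_left h6 hδ0) h5 (frob_nonneg _)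
      have := frob_nonneg X
      positivity
    have h8 : N * frob (W * Yᵀ) ≤ N * (g * (β * sval Ystar 1)) :=
      mul_le_mul_of_nonneg_left h5 hN0
    have h9 : g * (g - (2 * δ * β * (1 + γ) * sval Ystar 1 * frob X
        + 2 * β * sval Ystar 1 * N)) ≤ g * frob ((2 : ℝ) • (gradf (Y * Yᵀ) * Y)) := by
      linarith
    have h10 := le_of_mul_le_mul_left h9 hgpos
    linarith
  refine ⟨main.le, ?_⟩
  intro hδ hNle
  refine lt_of_le_of_lt ?_ main
  by_cases hk : κ = 0
  · have hδ' : δ = 0 := by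
      apply le_antisymm _ hδ0
      simpa [hk] using hδ
    have hN' : N = 0 := by
      apply le_antisymm _ hN0
      simpa [hk] using hNle
    simp [hk, hδ', hN']
  · have hsr' : sval Ystar r ≠ 0 := by
      intro h; apply hk; rw [hκ, h, div_zero]
    have hs : sval Ystar 1 = κ * sval Ystar r := by
      rw [hκ]; field_simp
    have hκp : 0 < κ := lt_of_le_of_ne hκ0 (Ne.symm hk)
    have hx := frob_nonneg X
    have b1 : 2 * δ * β * (1 + γ) * sval Ystar 1 * frob X
        ≤ α * μ * (sval Ystar r) ^ 3 / (16 * κ) := by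
      rcases hx.eq_or_lt with h0 | h0
      · rw [← h0, mul_zero]; positivity
      · calc 2 * δ * β * (1 + γ) * sval Ystar 1 * frob X
            = δ * (2 * β * (1 + γ) * sval Ystar 1 * frob X) := by ring
          _ ≤ α * μ / (32 * κ ^ 2 * β * (1 + γ)) * ((sval Ystar r) ^ 2 / frob X)
              * (2 * β * (1 + γ) * sval Ystar 1 * frob X) :=
              mul_le_mul_of_nonneg_right hδ (by positivity)
          _ = α * μ * (sval Ystar r) ^ 3 / (16 * κ) := by
              rw [hs]; field_simp; ring
    have b2 : 2 * β * sval Ystar 1 * N ≤ α * μ * (sval Ystar r) ^ 3 / (16 * κ) := by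
      calc 2 * β * sval Ystar 1 * N
            ≤ 2 * β * sval Ystar 1 * (α * μ / (32 * κ ^ 2 * β) * (sval Ystar r) ^ 2) :=
              mul_le_mul_of_nonneg_left hNle (by positivity)
          _ = α * μ * (sval Ystar r) ^ 3 / (16 * κ) := by
              rw [hs]; field_simp; ring
    have e : α * μ * (sval Ystar r) ^ 3 / (4 * κ) = α * μ * (sval Ystar r) ^ 3 / (8 * κ)
      + α * μ * (sval Ystar r) ^ 3 / (16 * κ) + α * μ * (sval Ystar r) ^ 3 / (16 * κ) := by
      field_simp; ring
    linarith
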